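/- Let b be a prime and n ∈ ℕ. With S_1 := ∑_{k=0}^{∞} b^{−μ_2(k)} and S_{2,n} := ∑_{k=0}^{b^n−1} b^{−μ_2(k)}, one has S_1 − S_{2,n} ≤ 2n / b^n. -/

import Mathlib

/-!
Split `[b^m, b^(m+1))` by its leading digit: if `0 < q < b` and `r < b^m`, then `q * b^m + r` has
the nonzero digit positions of `r` together with the new largest position `m`, so
`μ_{α+1}(q * b^m + r) = m + 1 + μ_α(r)` (`dick_lead`). Hence the partial sums
`F_α(m) = ∑_{k < b^m} b^{-μ_α(k)}` satisfy
`F_{α+1}(m+1) = F_{α+1}(m) + (b-1) / b^(m+1) * F_α(m)` (`blockSum_succ`), starting from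
`F_0(m) = b^m`. This gives `F_1(m) = 1 + m * (b-1)/b`, and then
`F_2(m) + b^{-m} * (1 + m * (b-1)/b + 1/b)` is independent of `m` (`blockSum_two_add_tail`).
The tail beyond `b^n` is therefore at most `b^{-n} * (1 + n * (b-1)/b + 1/b)`, which is at most
`2n / b^n` because `n ≥ 1`.
-/

open scoped BigOperators

/-- The `i`-th digit (starting from `i = 0`) of the `b`-adic expansion of `k`. -/
def bdigit (b k i : ℕ) : ℕ := k / b ^ i % b

/-- The set of indices of nonzero `b`-adic digits of `k`. -/
def bsupp (b k : ℕ) : Finset ℕ := (Finset.range (k + 1)).filter fun i => bdigit b k i ≠ 0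

/-- The Hamming metric `κ(k)`: the number of nonzero `b`-adic digits of `k`. -/
def hamming (b k : ℕ) : ℕ := (bsupp b k).card

/-- The Dick metric `μ_α(k)`: the sum of the `min(v, α)` largest exponents-plus-one
`a_1 > a_2 > ⋯` of the nonzero `b`-adic digits of `k`. -/
def dick (b α k : ℕ) : ℕ := ((((bsupp b k).sort (· ≤ ·)).reverse.take α).map (· + 1)).sum

/-- Digitwise addition `k ⊕ l` modulo `b` of the `b`-adic digits. -/
def dadd (b k l : ℕ) : ℕ :=
  ∑ i ∈ Finset.range (k + l + 1), (bdigit b k i + bdigit b l i) % b * b ^ i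

/-- Digitwise subtraction `k ⊖ l` modulo `b` of the `b`-adic digits. -/
def dsub (b k l : ℕ) : ℕ :=
  ∑ i ∈ Finset.range (k + l + 1), (bdigit b k i + (b - bdigit b l i)) % b * b ^ i

/-- Hamming metric of a vector: sum over coordinates. -/
def hammingVec (b : ℕ) {s : ℕ} (k : Fin s → ℕ) : ℕ := ∑ j, hamming b (k j)

/-- Dick metric of a vector: sum over coordinates. -/
def dickVec (b α : ℕ) {s : ℕ} (k : Fin s → ℕ) : ℕ := ∑ j, dick b α (k j)

theorem mem_bsupp {b : ℕ} (hb : 2 ≤ b) (k i : ℕ) : i ∈ bsupp b k ↔ bdigit b k i ≠ 0 := by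
  unfold bsupp
  rw [Finset.mem_filter, Finset.mem_range]
  refine ⟨fun h => h.2, fun h => ⟨?_, h⟩⟩
  by_contra hlt
  apply h
  have h1 : i < b ^ i := Nat.lt_pow_self (by omega)
  unfold bdigit
  rw [Nat.div_eq_of_lt (by omega), Nat.zero_mod]

theorem bdigit_eq_zero {b k m i : ℕ} (hb : 2 ≤ b) (hk : k < b ^ m) (hi : m ≤ i) :
    bdigit b k i = 0 := by
  unfold bdigit
  rw [Nat.div_eq_of_lt (hk.trans_le (Nat.pow_le_pow_right (by omega) hi)), Nat.zero_mod]

theorem bsupp_lead {b m q r : ℕ} (hb : 2 ≤ b) (hq : 0 < q) (hqb : q < b) (hr : r < b ^ m) :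
    bsupp b (q * b ^ m + r) = insert m (bsupp b r) := by
  ext i
  rw [Finset.mem_insert, mem_bsupp hb, mem_bsupp hb]
  have hpos : 0 < b ^ m := by positivity
  rcases lt_trichotomy i m with h | h | h
  · have hd : bdigit b (q * b ^ m + r) i = bdigit b r i := by
      unfold bdigit
      obtain ⟨d, rfl⟩ := Nat.exists_eq_add_of_lt h
      have e : q * b ^ (i + d + 1) + r = r + b ^ i * (b * (q * b ^ d)) := by ring
      rw [e, Nat.add_mul_div_left _ _ (by positivity), Nat.add_mul_mod_self_left]
    rw [hd]
    simp [h.ne]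
  · subst h
    have hd : bdigit b (q * b ^ i + r) i = q := by
      unfold bdigit
      rw [mul_comm, Nat.mul_add_div hpos, Nat.div_eq_of_lt hr, add_zero, Nat.mod_eq_of_lt hqb]
    rw [hd]
    simp [hq.ne']
  · have hlt : q * b ^ m + r < b ^ (m + 1) := by
      rw [pow_succ]
      nlinarith
    rw [bdigit_eq_zero hb hlt h, bdigit_eq_zero hb hr h.le]
    simp [h.ne']

theorem sort_insert_max {s : Finset ℕ} {m : ℕ} (h : ∀ i ∈ s, i < m) :
    (insert m s).sort (· ≤ ·) = s.sort (· ≤ ·) ++ [m] := by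
  have hm : m ∉ s := fun hm => lt_irrefl _ (h m hm)
  refine List.Perm.eq_of_pairwise (le := (· ≤ ·)) (fun a b _ _ => le_antisymm)
    (Finset.pairwise_sort _ _) ?_ ?_
  · rw [List.pairwise_append]
    refine ⟨Finset.pairwise_sort _ _, List.pairwise_singleton _ _, ?_⟩
    intro a ha c hc
    rw [List.mem_singleton] at hc
    rw [hc]
    exact (h a ((Finset.mem_sort _).1 ha)).le
  · rw [List.perm_ext_iff_of_nodup (Finset.sort_nodup _ _)]
    · intro a
      simp [or_comm]
    · rw [List.nodup_append]
      refine ⟨Finset.sort_nodup _ _, List.nodup_singleton _, ?_⟩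
      intro a ha c hc
      rw [List.mem_singleton] at hc
      rw [hc]
      exact (h a ((Finset.mem_sort _).1 ha)).ne

/-- Prepending a leading digit at position `m` adds `m + 1` to the metric and uses up one of the
`α + 1` counted digits. -/
theorem dick_lead {b m q r : ℕ} (α : ℕ) (hb : 2 ≤ b) (hq : 0 < q) (hqb : q < b)
    (hr : r < b ^ m) : dick b (α + 1) (q * b ^ m + r) = m + 1 + dick b α r := by
  have hlt : ∀ i ∈ bsupp b r, i < m := by
    intro i hi
    by_contra hle
    exact (mem_bsupp hb r i).1 hi (bdigit_eq_zero hb hr (not_lt.1 hle))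
  unfold dick
  rw [bsupp_lead hb hq hqb hr, sort_insert_max hlt]
  simp

/-- The partial sum `F_α(m) = ∑_{k < b^m} b^{-μ_α(k)}`. -/
noncomputable def blockSum (b α m : ℕ) : ℝ :=
  ∑ k ∈ Finset.range (b ^ m), (b : ℝ) ^ (-(dick b α k : ℝ))

theorem blockSum_succ {b : ℕ} (hb : 2 ≤ b) (α m : ℕ) :
    blockSum b (α + 1) (m + 1) =
      blockSum b (α + 1) m + ((b : ℝ) - 1) / (b : ℝ) ^ (m + 1) * blockSum b α m := by
  have hb0 : (0 : ℝ) < b := by exact_mod_cast (by omega : 0 < b)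
  -- Add the leading digits `1, …, c` one at a time.
  have key : ∀ c : ℕ, c + 1 ≤ b →
      ∑ k ∈ Finset.range ((c + 1) * b ^ m), (b : ℝ) ^ (-(dick b (α + 1) k : ℝ)) =
        blockSum b (α + 1) m + (c : ℝ) / (b : ℝ) ^ (m + 1) * blockSum b α m := by
    intro c
    induction c with
    | zero => intro _; simp [blockSum]
    | succ c ih =>
      intro hc
      rw [add_mul (c + 1) 1, one_mul, Finset.sum_range_add, ih (by omega)]
      have : ∀ r ∈ Finset.range (b ^ m),
          (b : ℝ) ^ (-(dick b (α + 1) ((c + 1) * b ^ m + r) : ℝ)) =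
            1 / (b : ℝ) ^ (m + 1) * (b : ℝ) ^ (-(dick b α r : ℝ)) := by
        intro r hr
        rw [dick_lead α hb (by omega) (by omega) (Finset.mem_range.1 hr), Nat.cast_add, neg_add,
          Real.rpow_add hb0, Real.rpow_neg hb0.le, Real.rpow_natCast, one_div]
      rw [Finset.sum_congr rfl this, ← Finset.mul_sum]
      unfold blockSum
      push_cast
      ring
  have h := key (b - 1) (by omega)
  rw [Nat.sub_add_cancel (by omega), ← pow_succ', Nat.cast_sub (by omega), Nat.cast_one] at h
  exact h

theorem blockSum_zero_left (b m : ℕ) : blockSum b 0 m = (b : ℝ) ^ m := by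
  simp [blockSum, dick]

theorem blockSum_zero_right (b α : ℕ) : blockSum b α 0 = 1 := by
  have h : bsupp b 0 = ∅ := by
    ext i
    simp [bsupp, bdigit]
  simp [blockSum, dick, h]

theorem blockSum_one {b : ℕ} (hb : 2 ≤ b) (m : ℕ) :
    blockSum b 1 m = 1 + m * (((b : ℝ) - 1) / b) := by
  have hb0 : (b : ℝ) ≠ 0 := by exact_mod_cast (by omega : b ≠ 0)
  induction m with
  | zero => simp [blockSum_zero_right]
  | succ m ih =>
    rw [blockSum_succ hb 0 m, ih, blockSum_zero_left]
    push_cast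
    field_simp
    ring

/-- Adding the exact value of the remaining tail to a partial sum gives a quantity independent of
`m`. -/
theorem blockSum_two_add_tail {b : ℕ} (hb : 2 ≤ b) (n N : ℕ) :
    blockSum b 2 (n + N) + (1 + (n + N : ℕ) * (((b : ℝ) - 1) / b) + 1 / b) / (b : ℝ) ^ (n + N) =
      blockSum b 2 n + (1 + n * (((b : ℝ) - 1) / b) + 1 / b) / (b : ℝ) ^ n := by
  have hb0 : (b : ℝ) ≠ 0 := by exact_mod_cast (by omega : b ≠ 0)
  induction N with
  | zero => simp
  | succ N ih =>
    rw [← ih, ← add_assoc, blockSum_succ hb 1, blockSum_one hb]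
    push_cast
    field_simp
    ring

/-- For a prime `b` and `n ∈ ℕ`, with `S_1 = ∑_{k≥0} b^{-μ_2(k)}` and
`S_{2,n} = ∑_{k<b^n} b^{-μ_2(k)}`, one has `S_1 - S_{2,n} ≤ 2n/b^n`. -/
theorem tail_sum_bound_two (b n : ℕ) (hb : b.Prime) (hn : 0 < n) :
    (∑' k : ℕ, (b : ℝ) ^ (-(dick b 2 k : ℝ))) -
      ∑ k ∈ Finset.range (b ^ n), (b : ℝ) ^ (-(dick b 2 k : ℝ)) ≤
    2 * n / (b : ℝ) ^ n := by
  have hb2 : 2 ≤ b := hb.two_le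
  have hb1 : (1 : ℝ) ≤ b := by exact_mod_cast hb.one_le
  have hb0 : (0 : ℝ) < b := by linarith
  have hn1 : (1 : ℝ) ≤ n := by exact_mod_cast hn
  have hnonneg : ∀ k : ℕ, 0 ≤ (b : ℝ) ^ (-(dick b 2 k : ℝ)) := fun k =>
    Real.rpow_nonneg hb0.le _
  rw [sub_le_iff_le_add']
  refine Real.tsum_le_of_sum_range_le hnonneg fun N => ?_
  have hN : N ≤ b ^ (n + N) :=
    (Nat.lt_pow_self (by omega)).le.trans
      (Nat.pow_le_pow_right (by omega) (Nat.le_add_left N n))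
  have hsub : ∑ k ∈ Finset.range N, (b : ℝ) ^ (-(dick b 2 k : ℝ)) ≤ blockSum b 2 (n + N) :=
    Finset.sum_le_sum_of_subset_of_nonneg (Finset.range_mono hN) fun k _ _ => hnonneg k
  have hdiv : 0 ≤ ((b : ℝ) - 1) / b := div_nonneg (by linarith) hb0.le
  have htail : 0 ≤ (1 + (n + N : ℕ) * (((b : ℝ) - 1) / b) + 1 / b) / (b : ℝ) ^ (n + N) := by
    positivity
  have hbound : (1 + n * (((b : ℝ) - 1) / b) + 1 / b) / (b : ℝ) ^ n ≤ 2 * n / (b : ℝ) ^ n := by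
    gcongr
    -- The numerator is `n + 1 - (n - 1) / b`.
    have e : 1 + n * (((b : ℝ) - 1) / b) + 1 / b = n + 1 - (n - 1) / b := by
      field_simp
      ring
    have h : 0 ≤ ((n : ℝ) - 1) / b := div_nonneg (by linarith) hb0.le
    rw [e]
    linarith
  have hinv := blockSum_two_add_tail hb2 n N
  change _ ≤ blockSum b 2 n + _
  linarith
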